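/- The map ψ(z',z_n) := (2^{1/2m₁}(1+z_n)^{−1/m₁} z₁, …, 2^{1/2m_{n−1}}(1+z_n)^{−1/m_{n−1}} z_{n−1}, (1−z_n)/(1+z_n)), with principal-branch complex powers, is a biholomorphism from D_P onto E_P: it is holomorphic and injective on D_P, maps D_P onto E_P, and its inverse is holomorphic on E_P. -/

import Mathlib

open Complex Metric Set

noncomputable section

/-- `ℂⁿ` with `n = N + 1`, carrying the Euclidean norm; points are written `z = (z', z_n)`
with `z' ∈ ℂᴺ` the first `N` coordinates and `z_n` the last coordinate. -/
abbrev CSp (N : ℕ) : Type := EuclideanSpace ℂ (Fin (N + 1))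

variable {N : ℕ}

/-- The last coordinate `z_n` of `z = (z', z_n)`. -/
def lastC (z : CSp N) : ℂ := z (Fin.last N)

/-- The first `N` coordinates `z'` of `z = (z', z_n)`. -/
def initC (z : CSp N) : Fin N → ℂ := fun j => z j.castSucc

/-- The point `(z', z_n) ∈ ℂⁿ`. -/
def mkPt (z' : Fin N → ℂ) (zn : ℂ) : CSp N := WithLp.toLp 2 (Fin.snoc z' zn)

/-- The weight `wt(K) = Σ_j k_j / (2 m_j)` of a multi-index `K` with respect to
`Λ = (1/m₁, …, 1/m_N)`. -/
def wt (m : Fin N → ℕ) (K : Fin N → ℕ) : ℝ := ∑ j, (K j : ℝ) / (2 * m j)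

/-- `P` is a real-valued weighted homogeneous polynomial of the form
`P(z') = Σ_{wt(K)=wt(L)=1/2} a_{KL} z'^K conj(z')^L` with `a_{KL} = conj (a_{LK})`. -/
def IsWHP (m : Fin N → ℕ) (P : (Fin N → ℂ) → ℝ) : Prop :=
  ∃ a : (Fin N → ℕ) → (Fin N → ℕ) → ℂ,
    {q : (Fin N → ℕ) × (Fin N → ℕ) | a q.1 q.2 ≠ 0}.Finite ∧
    (∀ K L, a K L = starRingEnd ℂ (a L K)) ∧
    (∀ K L, a K L ≠ 0 → wt m K = 1 / 2 ∧ wt m L = 1 / 2) ∧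
    (∀ z' : Fin N → ℂ, (P z' : ℂ) =
      ∑ᶠ K, ∑ᶠ L, a K L * (∏ j, z' j ^ K j) * ∏ j, starRingEnd ℂ (z' j) ^ L j)

/-- The general ellipsoid `D_P = {(z',z_n) : |z_n|² + P(z') < 1}`. -/
def DP (P : (Fin N → ℂ) → ℝ) : Set (CSp N) :=
  {z | ‖lastC z‖ ^ 2 + P (initC z) < 1}

/-- The model `E_P = {(z',z_n) : P(z') < 2 Re z_n}`. -/
def EP (P : (Fin N → ℂ) → ℝ) : Set (CSp N) :=
  {z | P (initC z) < 2 * (lastC z).re}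

/-- The map `ψ(z', z_n) = (2^{1/2m₁}(1+z_n)^{-1/m₁} z₁, …, (1-z_n)/(1+z_n))`,
with principal-branch complex powers. -/
def psiMap (m : Fin N → ℕ) (z : CSp N) : CSp N :=
  mkPt (fun j => (2 : ℂ) ^ (1 / (2 * (m j : ℂ))) * (1 + lastC z) ^ (-(1 / (m j : ℂ))) * initC z j)
       ((1 - lastC z) / (1 + lastC z))

/-!
Put `c = √2 / (1 + z_n)`. On the half-space `Re (1 + z_n) > 0`, which contains both domains, the map
is `ψ (z', z_n) = (δ_c z', (1 - z_n) / (1 + z_n))`, where `δ_c` multiplies `z_j` by `c ^ (1 / m_j)`.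
The Cayley transform in the last coordinate is an involution of the half-plane that turns `c` into
`c⁻¹`, so `ψ` is an involution of the half-space and is its own holomorphic inverse. Homogeneity gives
`P (δ_c z') = |c|² P z' = 2 P z' / |1 + z_n|²`, while
`2 Re ((1 - z_n) / (1 + z_n)) = 2 (1 - |z_n|²) / |1 + z_n|²`; hence `ψ z ∈ E_P` iff `z ∈ D_P`.
-/

/-- The Cayley transform `w ↦ (1 - w) / (1 + w)`, which exchanges the unit disc and the right
half-plane; it is the last component of `ψ`. -/
def cayley (w : ℂ) : ℂ := (1 - w) / (1 + w)

/-- The factor `√2 / (1 + w)` by whose weighted dilation `ψ` acts on the first coordinates. -/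
def cayleyScale (w : ℂ) : ℂ := (√2 : ℝ) / (1 + w)

/-- The weighted dilation `z' ↦ (c ^ (1 / m₁) z₁, …, c ^ (1 / m_N) z_N)`, with principal-branch
powers. -/
def weightedDilation (m : Fin N → ℕ) (c : ℂ) (z' : Fin N → ℂ) : Fin N → ℂ :=
  fun j => c ^ (1 / (m j : ℂ)) * z' j

/-- Weighted homogeneity `P (c ^ (1 / m₁) z₁, …, c ^ (1 / m_N) z_N) = |c|² P z'`, required for
`c = exp l` and the roots `exp (w j)`, where `m j * w j = l`: the logarithm `l` is common to all
coordinates because independently chosen branches of the roots need not preserve `P`. -/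
def IsWeightedHomogeneous (m : Fin N → ℕ) (P : (Fin N → ℂ) → ℝ) : Prop :=
  ∀ (l : ℂ) (w : Fin N → ℂ), (∀ j, m j * w j = l) →
    ∀ z' : Fin N → ℂ, P (fun j => exp (w j) * z' j) = ‖exp l‖ ^ 2 * P z'

/-- The half-space `Re (1 + z_n) > 0`, a common domain on which `ψ` is holomorphic. -/
def halfSpace (N : ℕ) : Set (CSp N) := {z | 0 < (1 + lastC z).re}

section CayleyTransform

variable {w : ℂ}

lemma one_add_ne_zero_of_re_pos (h : 0 < (1 + w).re) : 1 + w ≠ 0 :=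
  slitPlane_ne_zero (Or.inl h)

lemma re_ofReal_div_pos {r : ℝ} (hr : 0 < r) {u : ℂ} (hu : 0 < u.re) : 0 < ((r : ℂ) / u).re := by
  have hu0 : 0 < normSq u := normSq_pos.2 (slitPlane_ne_zero (Or.inl hu))
  rw [div_re, ofReal_re, ofReal_im, zero_mul, zero_div, add_zero]
  positivity

lemma one_add_cayley (h : 1 + w ≠ 0) : 1 + cayley w = 2 / (1 + w) := by
  unfold cayley
  field_simp
  ring

lemma cayley_cayley (h : 1 + w ≠ 0) : cayley (cayley w) = w := by
  rw [cayley, one_add_cayley h, cayley]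
  field_simp
  ring

lemma one_add_cayley_re_pos (h : 0 < (1 + w).re) : 0 < (1 + cayley w).re := by
  rw [one_add_cayley (one_add_ne_zero_of_re_pos h)]
  exact_mod_cast re_ofReal_div_pos two_pos h

lemma cayley_re (w : ℂ) : (cayley w).re = (1 - ‖w‖ ^ 2) / ‖1 + w‖ ^ 2 := by
  rw [cayley, div_re, ← add_div, normSq_eq_norm_sq]
  congr 1
  rw [← normSq_eq_norm_sq]
  simp only [normSq_apply, sub_re, add_re, sub_im, add_im, one_re, one_im]
  ring

lemma cayleyScale_re_pos (h : 0 < (1 + w).re) : 0 < (cayleyScale w).re :=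
  re_ofReal_div_pos (by positivity) h

lemma cayleyScale_cayley (h : 1 + w ≠ 0) : cayleyScale (cayley w) = (cayleyScale w)⁻¹ := by
  have hsq : ((√2 : ℝ) : ℂ) * (√2 : ℝ) = 2 := by
    exact_mod_cast Real.mul_self_sqrt zero_le_two
  rw [cayleyScale, cayleyScale, one_add_cayley h, ← hsq]
  field_simp

lemma norm_cayleyScale_sq (w : ℂ) : ‖cayleyScale w‖ ^ 2 = 2 / ‖1 + w‖ ^ 2 := by
  rw [cayleyScale, norm_div, div_pow, norm_real, Real.norm_eq_abs, sq_abs,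
    Real.sq_sqrt zero_le_two]

end CayleyTransform

section WeightedDilation

lemma ofReal_mul_cpow {r : ℝ} (hr : 0 < r) {u : ℂ} (hu : u ≠ 0) (s : ℂ) :
    ((r : ℂ) * u) ^ s = (r : ℂ) ^ s * u ^ s := by
  have hr0 : (r : ℂ) ≠ 0 := ofReal_ne_zero.2 hr.ne'
  rw [cpow_def_of_ne_zero (mul_ne_zero hr0 hu), cpow_def_of_ne_zero hr0, cpow_def_of_ne_zero hu,
    log_ofReal_mul hr hu, ofReal_log hr.le, add_mul, exp_add]

lemma sqrt_cpow {r : ℝ} (hr : 0 < r) (s : ℂ) : ((√r : ℝ) : ℂ) ^ s = (r : ℂ) ^ (s / 2) := by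
  rw [cpow_def_of_ne_zero (ofReal_ne_zero.2 (Real.sqrt_pos.2 hr).ne'),
    cpow_def_of_ne_zero (ofReal_ne_zero.2 hr.ne'), ← ofReal_log (Real.sqrt_nonneg r),
    Real.log_sqrt hr.le, ← ofReal_log hr.le]
  push_cast
  ring_nf

lemma cayleyScale_cpow {w : ℂ} (h : 0 < (1 + w).re) (s : ℂ) :
    cayleyScale w ^ s = 2 ^ (s / 2) * (1 + w) ^ (-s) := by
  have harg : (1 + w).arg ≠ Real.pi := slitPlane_arg_ne_pi (Or.inl h)
  rw [cayleyScale, div_eq_mul_inv,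
    ofReal_mul_cpow (by positivity) (inv_ne_zero (one_add_ne_zero_of_re_pos h)),
    sqrt_cpow two_pos, inv_cpow _ _ harg, cpow_neg, ofReal_ofNat]

lemma weightedDilation_inv_weightedDilation (m : Fin N → ℕ) {c : ℂ} (hc : c ∈ slitPlane)
    (z' : Fin N → ℂ) : weightedDilation m c⁻¹ (weightedDilation m c z') = z' := by
  funext j
  have hne : c ^ (1 / (m j : ℂ)) ≠ 0 := fun h0 =>
    slitPlane_ne_zero hc ((cpow_eq_zero_iff _ _).1 h0).1
  rw [weightedDilation, weightedDilation, inv_cpow _ _ (slitPlane_arg_ne_pi hc),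
    inv_mul_cancel_left₀ hne]

end WeightedDilation

section WeightedHomogeneous

variable {m : Fin N → ℕ} {P : (Fin N → ℂ) → ℝ}

lemma prod_exp_pow_of_wt_eq_half (hm : ∀ j, 0 < m j) {K : Fin N → ℕ} (hK : wt m K = 1 / 2)
    {l : ℂ} {w : Fin N → ℂ} (hw : ∀ j, m j * w j = l) : ∏ j, exp (w j) ^ K j = exp l := by
  have hwt : ∑ j, (K j : ℂ) / (2 * m j) = 1 / 2 := by
    simpa [wt] using congrArg (fun x : ℝ => (x : ℂ)) hK
  have hterm (j : Fin N) : (K j : ℂ) * w j = 2 * l * (K j / (2 * m j)) := by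
    have hmj : (m j : ℂ) ≠ 0 := Nat.cast_ne_zero.2 (hm j).ne'
    rw [← hw j]
    field_simp
  calc ∏ j, exp (w j) ^ K j = exp (∑ j, K j * w j) := by simp_rw [exp_sum, exp_nat_mul]
    _ = exp (2 * l * (1 / 2)) := by simp_rw [hterm, ← Finset.mul_sum, hwt]
    _ = exp l := by ring_nf

lemma IsWHP.isWeightedHomogeneous (hP : IsWHP m P) (hm : ∀ j, 0 < m j) :
    IsWeightedHomogeneous m P := by
  obtain ⟨a, -, -, hwt, hsum⟩ := hP
  intro l w hw z'
  suffices h : (P (fun j => exp (w j) * z' j) : ℂ) = exp l * starRingEnd ℂ (exp l) * P z' by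
    rw [mul_conj, normSq_eq_norm_sq] at h
    exact_mod_cast h
  rw [hsum, hsum, mul_finsum]
  refine finsum_congr fun K => ?_
  rw [mul_finsum]
  refine finsum_congr fun L => ?_
  rcases eq_or_ne (a K L) 0 with ha | ha
  · simp only [ha, zero_mul, mul_zero]
  obtain ⟨hK, hL⟩ := hwt K L ha
  have hconj : ∏ j, starRingEnd ℂ (exp (w j)) ^ L j = starRingEnd ℂ (exp l) := by
    rw [← prod_exp_pow_of_wt_eq_half hm hL hw, map_prod]
    simp only [map_pow]
  simp only [map_mul, mul_pow, Finset.prod_mul_distrib, hconj, prod_exp_pow_of_wt_eq_half hm hK hw]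
  ring

lemma IsWeightedHomogeneous.apply_weightedDilation (hP : IsWeightedHomogeneous m P)
    (hm : ∀ j, 0 < m j) {c : ℂ} (hc : c ≠ 0) (z' : Fin N → ℂ) :
    P (weightedDilation m c z') = ‖c‖ ^ 2 * P z' := by
  have hlog (j : Fin N) : m j * (log c * (1 / (m j : ℂ))) = log c := by
    have hmj : (m j : ℂ) ≠ 0 := Nat.cast_ne_zero.2 (hm j).ne'
    field_simp
  unfold weightedDilation
  simpa only [cpow_def_of_ne_zero hc, exp_log hc] using hP _ _ hlog z'

lemma IsWeightedHomogeneous.map_zero (hP : IsWeightedHomogeneous m P) (hm : ∀ j, 0 < m j) :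
    P 0 = 0 := by
  have hfix : weightedDilation m 2 0 = 0 := funext fun _ => mul_zero _
  have h := hP.apply_weightedDilation hm two_ne_zero 0
  rw [hfix, norm_ofNat] at h
  linarith

lemma IsWeightedHomogeneous.nonneg (hP : IsWeightedHomogeneous m P) (hm : ∀ j, 0 < m j)
    (hPpos : ∀ z' : Fin N → ℂ, z' ≠ 0 → 0 < P z') (z' : Fin N → ℂ) : 0 ≤ P z' := by
  rcases eq_or_ne z' 0 with rfl | hz'
  · exact (hP.map_zero hm).ge
  · exact (hPpos z' hz').le

end WeightedHomogeneous

section HalfSpace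

variable {P : (Fin N → ℂ) → ℝ}

lemma DP_subset_halfSpace (hP : ∀ z', 0 ≤ P z') : DP P ⊆ halfSpace N := by
  intro z (hz : ‖lastC z‖ ^ 2 + P (initC z) < 1)
  have hnorm : ‖lastC z‖ < 1 :=
    (sq_lt_one_iff₀ (norm_nonneg _)).1 (by linarith [hP (initC z)])
  have hre : -‖lastC z‖ ≤ (lastC z).re := (abs_le.1 (abs_re_le_norm _)).1
  change 0 < (1 + lastC z).re
  rw [add_re, one_re]
  linarith

lemma EP_subset_halfSpace (hP : ∀ z', 0 ≤ P z') : EP P ⊆ halfSpace N := by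
  intro z (hz : P (initC z) < 2 * (lastC z).re)
  change 0 < (1 + lastC z).re
  rw [add_re, one_re]
  linarith [hP (initC z)]

end HalfSpace

section Psi

variable {m : Fin N → ℕ} {P : (Fin N → ℂ) → ℝ} {z : CSp N}

lemma CSp.ext {z w : CSp N} (hinit : initC z = initC w) (hlast : lastC z = lastC w) : z = w := by
  ext i
  exact Fin.lastCases hlast (fun j => congrFun hinit j) i

lemma lastC_psiMap (m : Fin N → ℕ) (z : CSp N) : lastC (psiMap m z) = cayley (lastC z) := by
  simp [lastC, psiMap, mkPt, cayley]

lemma initC_psiMap (m : Fin N → ℕ) (hz : z ∈ halfSpace N) :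
    initC (psiMap m z) = weightedDilation m (cayleyScale (lastC z)) (initC z) := by
  funext j
  rw [weightedDilation, cayleyScale_cpow hz, div_div, mul_comm (m j : ℂ)]
  simp [initC, psiMap, mkPt]

lemma mapsTo_psiMap_halfSpace (m : Fin N → ℕ) :
    MapsTo (psiMap m) (halfSpace N) (halfSpace N) := by
  intro z hz
  change 0 < (1 + lastC (psiMap m z)).re
  rw [lastC_psiMap]
  exact one_add_cayley_re_pos hz

lemma leftInvOn_psiMap_halfSpace (m : Fin N → ℕ) :
    LeftInvOn (psiMap m) (psiMap m) (halfSpace N) := by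
  intro z hz
  have hne : 1 + lastC z ≠ 0 := one_add_ne_zero_of_re_pos hz
  refine CSp.ext ?_ ?_
  · rw [initC_psiMap m (mapsTo_psiMap_halfSpace m hz), initC_psiMap m hz, lastC_psiMap,
      cayleyScale_cayley hne, weightedDilation_inv_weightedDilation m
        (Or.inl (cayleyScale_re_pos hz))]
  · rw [lastC_psiMap, lastC_psiMap, cayley_cayley hne]

lemma psiMap_mem_EP_iff (hP : IsWeightedHomogeneous m P) (hm : ∀ j, 0 < m j)
    (hz : z ∈ halfSpace N) : psiMap m z ∈ EP P ↔ z ∈ DP P := by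
  have hnorm : 0 < ‖1 + lastC z‖ := norm_pos_iff.2 (one_add_ne_zero_of_re_pos hz)
  have hscale : cayleyScale (lastC z) ≠ 0 := slitPlane_ne_zero (Or.inl (cayleyScale_re_pos hz))
  change P (initC (psiMap m z)) < 2 * (lastC (psiMap m z)).re ↔ ‖lastC z‖ ^ 2 + P (initC z) < 1
  rw [initC_psiMap m hz, hP.apply_weightedDilation hm hscale, norm_cayleyScale_sq, lastC_psiMap,
    cayley_re, div_mul_eq_mul_div, ← mul_div_assoc, div_lt_div_iff_of_pos_right (by positivity)]
  constructor <;> intro h <;> linarith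

lemma psiMap_mem_DP_iff (hP : IsWeightedHomogeneous m P) (hm : ∀ j, 0 < m j)
    (hz : z ∈ halfSpace N) : psiMap m z ∈ DP P ↔ z ∈ EP P := by
  rw [← psiMap_mem_EP_iff hP hm (mapsTo_psiMap_halfSpace m hz), leftInvOn_psiMap_halfSpace m hz]

lemma differentiableOn_psiMap_halfSpace (m : Fin N → ℕ) :
    DifferentiableOn ℂ (psiMap m) (halfSpace N) := by
  have hcoord (i : Fin (N + 1)) : DifferentiableOn ℂ (fun z : CSp N => z i) (halfSpace N) := by
    fun_prop
  have hden : DifferentiableOn ℂ (fun z : CSp N => 1 + lastC z) (halfSpace N) :=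
    (hcoord (Fin.last N)).const_add 1
  have hne : ∀ z ∈ halfSpace N, 1 + lastC z ≠ 0 := fun _ hz => one_add_ne_zero_of_re_pos hz
  rw [differentiableOn_euclidean]
  refine Fin.lastCases ?_ fun j => ?_
  · simp only [psiMap, mkPt, Fin.snoc_last, div_eq_mul_inv]
    exact ((hcoord (Fin.last N)).const_sub 1).mul (hden.inv hne)
  · simp only [psiMap, mkPt, Fin.snoc_castSucc]
    exact ((hden.cpow_const fun z hz => Or.inl hz).const_mul _).mul (hcoord j.castSucc)

end Psi

theorem stmt6_general (m : Fin N → ℕ) (hm : ∀ j, 0 < m j) (P : (Fin N → ℂ) → ℝ)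
    (hP : IsWeightedHomogeneous m P) (hPnonneg : ∀ z' : Fin N → ℂ, 0 ≤ P z') :
    DifferentiableOn ℂ (psiMap m) (DP P) ∧ InjOn (psiMap m) (DP P) ∧
    psiMap m '' DP P = EP P ∧
    ∃ g : CSp N → CSp N, DifferentiableOn ℂ g (EP P) ∧
      (∀ z ∈ DP P, g (psiMap m z) = z) ∧ ∀ w ∈ EP P, psiMap m (g w) = w := by
  have hD : DP P ⊆ halfSpace N := DP_subset_halfSpace hPnonneg
  have hE : EP P ⊆ halfSpace N := EP_subset_halfSpace hPnonneg
  have hdiff := differentiableOn_psiMap_halfSpace m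
  have hinv : InvOn (psiMap m) (psiMap m) (DP P) (EP P) :=
    ⟨(leftInvOn_psiMap_halfSpace m).mono hD, (leftInvOn_psiMap_halfSpace m).mono hE⟩
  have hbij : BijOn (psiMap m) (DP P) (EP P) :=
    hinv.bijOn (fun z hz => (psiMap_mem_EP_iff hP hm (hD hz)).2 hz)
      fun z hz => (psiMap_mem_DP_iff hP hm (hE hz)).2 hz
  exact ⟨hdiff.mono hD, hbij.injOn, hbij.image_eq, psiMap m, hdiff.mono hE, hinv.1, hinv.2⟩

/-- The map `ψ` is a biholomorphism from `D_P` onto `E_P`: it is holomorphic and injective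
on `D_P`, maps `D_P` onto `E_P`, and its inverse is holomorphic on `E_P`. -/
theorem stmt6 {N : ℕ} (hN : 1 ≤ N) (m : Fin N → ℕ) (hm : ∀ j, 0 < m j)
    (P : (Fin N → ℂ) → ℝ) (hP : IsWHP m P)
    (hPpos : ∀ z' : Fin N → ℂ, z' ≠ 0 → 0 < P z') :
    DifferentiableOn ℂ (psiMap m) (DP P) ∧ InjOn (psiMap m) (DP P) ∧
    psiMap m '' DP P = EP P ∧
    ∃ g : CSp N → CSp N, DifferentiableOn ℂ g (EP P) ∧
      (∀ z ∈ DP P, g (psiMap m z) = z) ∧ ∀ w ∈ EP P, psiMap m (g w) = w :=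
  stmt6_general m hm P (hP.isWeightedHomogeneous hm)
    ((hP.isWeightedHomogeneous hm).nonneg hm hPpos)
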